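/- Closed form for the Tetris function: let x ∈ ℤ_{≥0}^n be a nondecreasing position (x_1 ≤ ⋯ ≤ x_n) of Nim^=_{n,k}. Set s = Σ_{i=1}^{n−k} x_i; for i = 1, …, k−1 set y_i = x_{n−k+i+1} − x_{n−k+i}; set s_0 = 0 and s_i = s_{i−1} + i·y_i for i = 1, …, k−1. Let ℓ ∈ {0, …, k−1} be the unique index such that s_ℓ ≤ s and (ℓ = k−1 or s < s_{ℓ+1}), let a = s − s_ℓ and α = ⌊a/(ℓ+1)⌋. Then T_{n,k}(x) = x_{n−k+ℓ+1} + α. -/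

import Mathlib

/-- A move in Exact k-Nim `Nim^=_{n,k}`: all piles weakly decrease and
exactly `k` piles strictly decrease. -/
def ExactMove (n k : ℕ) (x x' : Fin n → ℕ) : Prop :=
  (∀ i, x' i ≤ x i) ∧ (Finset.univ.filter fun i => x' i < x i).card = k

/-- There is a chain of `m` consecutive moves starting at `x`. -/
def HasChain (n k : ℕ) (x : Fin n → ℕ) (m : ℕ) : Prop :=
  ∃ f : Fin (m + 1) → Fin n → ℕ, f 0 = x ∧
    ∀ i : Fin m, ExactMove n k (f i.castSucc) (f i.succ)

/-- The Tetris function `T_{n,k}(x)`: the maximum number of consecutive moves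
that can be made starting from `x`. -/
noncomputable def tetris (n k : ℕ) (x : Fin n → ℕ) : ℕ :=
  sSup {m | HasChain n k x m}

/-! A chain of `m` moves from `x` exists iff `k * m ≤ ∑ i, min (x i) m`. Necessity: `m` moves hit a
pile at most `min (x i) m` times. Sufficiency: with `m + 1` moves to go, give priority to the piles
taller than `m`, since a pile of height at most `m` may safely wait.

If the piles outside `A` are too tall to be exhausted, all of them can be hit in every move, so that
the number of moves is `(∑ i ∈ A, x i) / (k - #Aᶜ)`. In the closed form, `A` consists of the piles
up to `p = n - k + ℓ` (numbered from `0`), and `s - S ℓ` is the number of tokens left over after the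
first `n - k` piles have been used to raise the next `ℓ` to the height of pile `p`. -/

open Finset

/-- The position obtained from `x` by removing one token from each pile in `A`; an empty pile
stays empty. -/
def removeOne {ι : Type*} [DecidableEq ι] (x : ι → ℕ) (A : Finset ι) (i : ι) : ℕ :=
  x i - if i ∈ A then 1 else 0

section RemoveOne

variable {ι : Type*} [Fintype ι] {x : ι → ℕ} {k m : ℕ}

lemma le_card_pos_of_mul_le_sum_min (hm : 0 < m) (h : k * m ≤ ∑ i, min (x i) m) :
    k ≤ #{i | 0 < x i} := by
  refine Nat.le_of_mul_le_mul_right (h.trans ?_) hm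
  calc ∑ i, min (x i) m ≤ ∑ i, (if 0 < x i then 1 else 0) * m := sum_le_sum fun i _ => by
        split_ifs <;> omega
    _ = #{i | 0 < x i} * m := by rw [← sum_mul, ← card_filter]

variable [DecidableEq ι] {A : Finset ι}

lemma card_mul_le_sum_min_removeOne (hA : ∀ i ∈ A, m < x i) :
    #A * m ≤ ∑ i, min (removeOne x A i) m :=
  calc #A * m = ∑ _i ∈ A, m := by rw [sum_const, smul_eq_mul]
    _ ≤ ∑ i ∈ A, min (removeOne x A i) m := sum_le_sum fun i hi => by
      have := hA i hi
      simp only [removeOne, hi, if_true]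
      omega
    _ ≤ ∑ i, min (removeOne x A i) m := sum_le_univ_sum_of_nonneg fun _ => Nat.zero_le _

lemma sum_min_succ_le_sum_min_removeOne_add_card (hA : ∀ i, m < x i → i ∈ A) :
    ∑ i, min (x i) (m + 1) ≤ ∑ i, min (removeOne x A i) m + #A :=
  calc ∑ i, min (x i) (m + 1)
      ≤ ∑ i, (min (removeOne x A i) m + if i ∈ A then 1 else 0) := sum_le_sum fun i _ => by
        have := hA i
        unfold removeOne
        split_ifs <;> grind
    _ = ∑ i, min (removeOne x A i) m + #A := by
        rw [sum_add_distrib, ← card_filter, filter_univ_mem]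

lemma exists_removeOne_mul_le_sum_min (h : k * (m + 1) ≤ ∑ i, min (x i) (m + 1)) :
    ∃ A : Finset ι, #A = k ∧ (∀ i ∈ A, 0 < x i) ∧ k * m ≤ ∑ i, min (removeOne x A i) m := by
  have hpos : k ≤ #{i | 0 < x i} := le_card_pos_of_mul_le_sum_min m.succ_pos h
  rcases le_total k #{i | m < x i} with htall | htall
  · obtain ⟨A, hA, rfl⟩ := exists_subset_card_eq htall
    have hA : ∀ i ∈ A, m < x i := fun i hi => (mem_filter_univ i).1 (hA hi)
    exact ⟨A, rfl, fun i hi => (Nat.zero_le m).trans_lt (hA i hi),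
      card_mul_le_sum_min_removeOne hA⟩
  · have hsub : ({i | m < x i} : Finset ι) ⊆ ({i | 0 < x i} : Finset ι) :=
      monotone_filter_right _ fun _ _ => (Nat.zero_le m).trans_lt
    obtain ⟨A, htallA, hA, rfl⟩ := exists_subsuperset_card_eq hsub htall hpos
    refine ⟨A, rfl, fun i hi => (mem_filter_univ i).1 (hA hi), ?_⟩
    have hsum := sum_min_succ_le_sum_min_removeOne_add_card (x := x) (m := m)
      fun i hi => htallA ((mem_filter_univ i).2 hi)
    rw [Nat.mul_succ] at h
    omega

end RemoveOne

section Chains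

variable {n k m : ℕ} {x x' : Fin n → ℕ}

lemma exactMove_removeOne {A : Finset (Fin n)} (hA : ∀ i ∈ A, 0 < x i) :
    ExactMove n #A x (removeOne x A) := by
  refine ⟨fun i => Nat.sub_le _ _, congrArg card ?_⟩
  ext i
  have := hA i
  rw [mem_filter_univ, removeOne]
  split_ifs <;> grind

lemma ExactMove.sum_min_add_le (h : ExactMove n k x x') (m : ℕ) :
    ∑ i, min (x' i) m + k ≤ ∑ i, min (x i) (m + 1) :=
  calc ∑ i, min (x' i) m + k = ∑ i, (min (x' i) m + if x' i < x i then 1 else 0) := by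
        rw [sum_add_distrib, ← card_filter, h.2]
    _ ≤ ∑ i, min (x i) (m + 1) := sum_le_sum fun i _ => by
        have := h.1 i
        split_ifs <;> omega

lemma hasChain_zero (n k : ℕ) (x : Fin n → ℕ) : HasChain n k x 0 :=
  ⟨fun _ => x, rfl, fun i => i.elim0⟩

lemma hasChain_succ_iff :
    HasChain n k x (m + 1) ↔ ∃ x', ExactMove n k x x' ∧ HasChain n k x' m := by
  constructor
  · rintro ⟨f, rfl, hf⟩
    exact ⟨f 1, hf 0, fun i => f i.succ, rfl, fun i => hf i.succ⟩
  · rintro ⟨x', hmove, f, rfl, hf⟩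
    exact ⟨Fin.cons x f, rfl, Fin.cases hmove hf⟩

theorem hasChain_iff_mul_le_sum_min : HasChain n k x m ↔ k * m ≤ ∑ i, min (x i) m := by
  induction m generalizing x with
  | zero => simp only [hasChain_zero, mul_zero, zero_le]
  | succ m ih =>
    rw [hasChain_succ_iff]
    constructor
    · rintro ⟨x', hmove, hchain⟩
      calc k * (m + 1) = k * m + k := Nat.mul_succ k m
        _ ≤ ∑ i, min (x' i) m + k := Nat.add_le_add_right (ih.1 hchain) k
        _ ≤ ∑ i, min (x i) (m + 1) := hmove.sum_min_add_le m
    · intro h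
      obtain ⟨A, rfl, hpos, hA⟩ := exists_removeOne_mul_le_sum_min h
      exact ⟨removeOne x A, exactMove_removeOne hpos, ih.2 hA⟩

end Chains

section Tetris

variable {n k : ℕ} {x : Fin n → ℕ}

theorem tetris_eq_of_sum_mem_Ico {A : Finset (Fin n)} {c t : ℕ} (hk : c + #Aᶜ = k)
    (hshort : ∀ i ∈ A, x i ≤ t) (htall : ∀ i ∉ A, t ≤ x i)
    (hsum : ∑ i ∈ A, x i ∈ Set.Ico (c * t) (c * (t + 1))) :
    tetris n k x = t := by
  have hgreatest : IsGreatest {m | HasChain n k x m} t := by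
    constructor
    · refine hasChain_iff_mul_le_sum_min.2 ?_
      calc k * t = c * t + #Aᶜ * t := by rw [← hk, add_mul]
        _ ≤ ∑ i ∈ A, x i + ∑ _i ∈ Aᶜ, t := by
          rw [sum_const, smul_eq_mul]
          exact Nat.add_le_add_right hsum.1 _
        _ = ∑ i ∈ A, min (x i) t + ∑ i ∈ Aᶜ, min (x i) t := congrArg₂ _
          (sum_congr rfl fun i hi => (min_eq_left (hshort i hi)).symm)
          (sum_congr rfl fun i hi => (min_eq_right (htall i (mem_compl.1 hi))).symm)
        _ = ∑ i, min (x i) t := sum_add_sum_compl A _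
    · intro m hm
      have hle : c * m ≤ ∑ i ∈ A, x i := by
        refine Nat.le_of_add_le_add_right (b := #Aᶜ * m) ?_
        calc c * m + #Aᶜ * m = k * m := by rw [← add_mul, hk]
          _ ≤ ∑ i, min (x i) m := hasChain_iff_mul_le_sum_min.1 hm
          _ = ∑ i ∈ A, min (x i) m + ∑ i ∈ Aᶜ, min (x i) m := (sum_add_sum_compl A _).symm
          _ ≤ ∑ i ∈ A, x i + #Aᶜ * m := Nat.add_le_add
            (sum_le_sum fun i _ => min_le_left _ _)
            (sum_le_card_nsmul _ _ _ fun i _ => min_le_right _ _)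
      exact Nat.le_of_lt_succ (Nat.lt_of_mul_lt_mul_left (hle.trans_lt hsum.2))
  exact hgreatest.csSup_eq

theorem tetris_eq_add_div_of_monotone (hx : Monotone x) {p : Fin n} {c a : ℕ} (hc : 0 < c)
    (hk : c + #(Ioi p) = k) (hsum : ∑ i ∈ Iic p, x i = c * x p + a)
    (htall : ∀ i, p < i → a < c * (x i - x p)) :
    tetris n k x = x p + a / c := by
  refine tetris_eq_of_sum_mem_Ico (A := Iic p) (c := c) ?_ (fun i hi => ?_) (fun i hi => ?_) ?_
  · have hcompl : (Iic p)ᶜ = Ioi p := by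
      ext i
      rw [mem_compl, mem_Iic, mem_Ioi, not_le]
    rwa [hcompl]
  · exact (hx (mem_Iic.1 hi)).trans (Nat.le_add_right _ _)
  · have hlt := Nat.div_lt_of_lt_mul (htall i (not_le.1 (mt mem_Iic.2 hi)))
    exact (Nat.add_lt_of_lt_sub' hlt).le
  · have hle := Nat.mul_div_le a c
    have hlt := Nat.lt_mul_div_succ a hc
    rw [hsum, Set.mem_Ico, add_assoc, mul_add, mul_add]
    omega

end Tetris

section PrefixSums

variable {n : ℕ}

lemma sum_Iic_eq_sum_filter_val_lt_add {M : Type*} [AddCommMonoid M] (x : Fin n → M)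
    (p : Fin n) : ∑ i ∈ Iic p, x i = ∑ i with i.val < p.val, x i + x p := by
  rw [← Iio_insert, sum_insert notMem_Iio_self, add_comm]
  congr 2
  ext i
  rw [mem_Iio, mem_filter_univ, Fin.lt_def]

/-- `S i` counts the tokens needed to raise the piles `q, …, q + i - 1` to the height of pile
`q + i`. -/
lemma fill_add_sum_Iic {x : Fin n → ℕ} (hx : Monotone x) {q : ℕ} {S : ℕ → ℕ} (hS0 : S 0 = 0)
    (hS : ∀ (i : ℕ) (hi : q + i + 1 < n),
      S (i + 1) = S i + (i + 1) * (x ⟨q + i + 1, hi⟩ - x ⟨q + i, by omega⟩))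
    (i : ℕ) (hi : q + i < n) :
    S i + ∑ j ∈ Iic ⟨q + i, hi⟩, x j =
      ∑ j with j.val < q, x j + (i + 1) * x ⟨q + i, hi⟩ := by
  induction i with
  | zero => rw [sum_Iic_eq_sum_filter_val_lt_add, hS0, zero_add, zero_add, one_mul]; rfl
  | succ i ih =>
    have hstep : x ⟨q + i, by omega⟩ ≤ x ⟨q + i + 1, hi⟩ := hx (Nat.le_succ _)
    have hIic : ({j | j.val < q + i + 1} : Finset (Fin n)) = Iic ⟨q + i, by omega⟩ := by
      ext j
      rw [mem_filter_univ, mem_Iic, Fin.le_def, Nat.lt_succ_iff]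
    obtain ⟨d, hd⟩ := Nat.exists_eq_add_of_le hstep
    have hsum := sum_Iic_eq_sum_filter_val_lt_add x ⟨q + i + 1, hi⟩
    rw [hIic] at hsum
    have hSi := hS i hi
    rw [hd, Nat.add_sub_cancel_left] at hSi
    simp only [← add_assoc q i 1]
    rw [hsum, hSi, hd]
    linarith [ih (by omega)]

end PrefixSums

/-- Closed form for the Tetris function of a nondecreasing position `x`:
with `s = Σ_{i<n-k} xᵢ`, `S 0 = 0`, `S i = S (i-1) + i·(x_{n-k+i} - x_{n-k+i-1})`
(0-based indices) for `1 ≤ i ≤ k-1`, and `ℓ` the unique index with `S ℓ ≤ s` and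
(`ℓ = k-1` or `s < S (ℓ+1)`), putting `a = s - S ℓ` and `α = ⌊a/(ℓ+1)⌋`, we have
`T_{n,k}(x) = x_{n-k+ℓ} + α` (0-based index `n-k+ℓ`). -/
theorem tetris_closed_form (n k : ℕ) (hk1 : 1 ≤ k) (hkn : k ≤ n)
    (x : Fin n → ℕ) (hmono : Monotone x)
    (s : ℕ) (hs : s = ∑ i ∈ Finset.univ.filter (fun i : Fin n => (i : ℕ) < n - k), x i)
    (S : ℕ → ℕ) (hS0 : S 0 = 0)
    (hS : ∀ (i : ℕ) (_hi1 : 1 ≤ i) (_hi2 : i ≤ k - 1),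
      S i = S (i - 1) + i * (x ⟨n - k + i, by omega⟩ - x ⟨n - k + i - 1, by omega⟩))
    (ℓ : ℕ) (hℓ : ℓ ≤ k - 1) (hsℓ : S ℓ ≤ s) (hℓtop : ℓ = k - 1 ∨ s < S (ℓ + 1))
    (a : ℕ) (ha : a = s - S ℓ) (α : ℕ) (hα : α = a / (ℓ + 1)) :
    tetris n k x = x ⟨n - k + ℓ, by omega⟩ + α := by
  obtain ⟨q, hq⟩ : ∃ q, q = n - k := ⟨_, rfl⟩
  simp only [← hq] at hs hS ⊢
  have hstep (i : ℕ) (hi : q + i + 1 < n) :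
      S (i + 1) = S i + (i + 1) * (x ⟨q + i + 1, hi⟩ - x ⟨q + i, by omega⟩) :=
    hS (i + 1) (by omega) (by omega)
  have hfill := fill_add_sum_Iic hmono hS0 hstep ℓ (by omega)
  rw [← hs] at hfill
  rw [hα]
  refine tetris_eq_add_div_of_monotone hmono ℓ.succ_pos ?_ (by omega) fun i hi => ?_
  · rw [Fin.card_Ioi, Fin.val_mk]
    omega
  · have hpi : q + ℓ + 1 ≤ i := hi
    have hnext : q + ℓ + 1 < n := by omega
    have hs_lt : s < S (ℓ + 1) := hℓtop.resolve_left (by omega)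
    rw [hstep ℓ hnext] at hs_lt
    calc a < (ℓ + 1) * (x ⟨q + ℓ + 1, hnext⟩ - x ⟨q + ℓ, by omega⟩) := by omega
      _ ≤ (ℓ + 1) * (x i - x ⟨q + ℓ, by omega⟩) :=
        Nat.mul_le_mul_left _ (Nat.sub_le_sub_right (hmono hpi) _)
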